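/- Under the constraint system together with the bounded k-th moment assumption, with δ = 1 − 2ε, the distance between the two empirical means satisfies ‖μ − μ*‖^k ≤ 2^{2k−1} · ε^{k−1} · k^{k/2} / δ^k. -/

import Mathlib

open Finset MeasureTheory
open scoped BigOperators InnerProductSpace

/-- If `b - a` is constantly `V` on `G` and `a`, `b` have the same total, then the discrepancy off
`G` forces a bound on `V` in terms of the `k`-th moments of `a` and `b`. -/
lemma card_mul_pow_le_of_agree {ι : Type*} [Fintype ι] [DecidableEq ι] (G : Finset ι)
    (a b : ι → ℝ) (V : ℝ) {k : ℕ} (hk : Even k) (hk0 : k ≠ 0)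
    (hG : ∀ i ∈ G, b i - a i = V) (hsum : ∑ i, a i = ∑ i, b i) :
    ((#G : ℝ) * V) ^ k ≤
      (#Gᶜ : ℝ) ^ (k - 1) * (2 ^ (k - 1) * (∑ i, a i ^ k + ∑ i, b i ^ k)) := by
  have hsplit : (#G : ℝ) * V = ∑ i ∈ Gᶜ, (a i - b i) := by
    have h := Finset.sum_add_sum_compl G (fun i => a i - b i)
    have hG' : ∑ i ∈ G, (a i - b i) = -((#G : ℝ) * V) := by
      rw [Finset.sum_congr rfl (fun i hi => show a i - b i = -V by linarith [hG i hi])]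
      simp
    rw [Finset.sum_sub_distrib (s := Finset.univ), hG'] at h
    linarith
  have hjensen : (∑ i ∈ Gᶜ, (a i - b i)) ^ k ≤
      (#Gᶜ : ℝ) ^ (k - 1) * ∑ i ∈ Gᶜ, (a i - b i) ^ k := by
    obtain ⟨m, rfl⟩ := Nat.exists_eq_succ_of_ne_zero hk0
    calc (∑ i ∈ Gᶜ, (a i - b i)) ^ (m + 1) = |∑ i ∈ Gᶜ, (a i - b i)| ^ (m + 1) :=
          (hk.pow_abs _).symm
      _ ≤ (∑ i ∈ Gᶜ, |a i - b i|) ^ (m + 1) :=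
          pow_le_pow_left₀ (abs_nonneg _) (Finset.abs_sum_le_sum_abs _ _) _
      _ ≤ (#Gᶜ : ℝ) ^ m * ∑ i ∈ Gᶜ, |a i - b i| ^ (m + 1) := by
          rcases Gᶜ.eq_empty_or_nonempty with h | h
          · simp [h]
          · have hpos : (0 : ℝ) < (#Gᶜ : ℝ) ^ m := pow_pos (by exact_mod_cast h.card_pos) m
            exact (div_le_iff₀' hpos).mp
              (pow_sum_div_card_le_sum_pow (fun i _ => abs_nonneg _) m)
      _ = _ := by simp [hk.pow_abs]
  rw [hsplit]
  refine hjensen.trans (mul_le_mul_of_nonneg_left ?_ (by positivity))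
  calc ∑ i ∈ Gᶜ, (a i - b i) ^ k ≤ ∑ i, (a i - b i) ^ k :=
        Finset.sum_le_sum_of_subset_of_nonneg (Finset.subset_univ _)
          (fun i _ _ => hk.pow_nonneg _)
    _ ≤ ∑ i, 2 ^ (k - 1) * (a i ^ k + b i ^ k) := by
        refine Finset.sum_le_sum fun i _ => ?_
        simpa [sub_eq_add_neg, hk.neg_pow] using hk.add_pow_le (a := a i) (b := -b i)
    _ = _ := by rw [← Finset.mul_sum, Finset.sum_add_distrib]

/-- The inner products of a family, centered at its mean, with a fixed vector sum to zero. -/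
lemma sum_inner_sub_mean_eq_zero {E : Type*} [NormedAddCommGroup E] [InnerProductSpace ℝ E]
    {n : ℕ} (hn : n ≠ 0) (x : Fin n → E) (v : E) :
    ∑ i, ⟪x i - (1 / (n : ℝ)) • ∑ j, x j, v⟫_ℝ = 0 := by
  have hn' : (n : ℝ) ≠ 0 := Nat.cast_ne_zero.mpr hn
  rw [← sum_inner, Finset.sum_sub_distrib, Finset.sum_const, Finset.card_univ, Fintype.card_fin,
    ← Nat.cast_smul_eq_nsmul ℝ, smul_smul, mul_one_div_cancel hn', one_smul, sub_self,
    inner_zero_left]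

/-- Theorem D.2 of the paper: optimal breakdown point for certifiably bounded `k`-th moments,
`‖μ − μ*‖^k ≤ 2^(2k−1) · ε^(k−1) · k^(k/2) / δ^k` with `δ = 1 − 2ε`. -/
theorem bounded_kth_moment_optimal_breakdown
    (n d k : ℕ) (hn : 1 ≤ n) (hd : 1 ≤ d) (hk : 2 ≤ k) (hkpow : ∃ m : ℕ, k = 2 ^ m)
    (ε : ℝ) (hε0 : 0 ≤ ε) (hε : ε < 1 / 2)
(z x xs : Fin n → EuclideanSpace ℝ (Fin d)) (w ws : Fin n → ℝ)
    (hw : ∀ i, w i ^ 2 = w i)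
    (hwz : ∀ i, w i • (z i - x i) = 0)
    (hws : ∀ i, ws i ^ 2 = ws i)
    (hwsz : ∀ i, ws i • (z i - xs i) = 0)
    (hwsum : 1 - ε ≤ (1 / (n : ℝ)) * ∑ i, w i)
    (hwssum : 1 - ε ≤ (1 / (n : ℝ)) * ∑ i, ws i)
    (μ μs : EuclideanSpace ℝ (Fin d))
    (hμ : μ = (1 / (n : ℝ)) • ∑ i, x i)
    (hμs : μs = (1 / (n : ℝ)) • ∑ i, xs i)
    (hmom : ∀ v : EuclideanSpace ℝ (Fin d),
      (1 / (n : ℝ)) * ∑ i, ⟪x i - μ, v⟫_ℝ ^ k ≤ (k : ℝ) ^ ((k : ℝ) / 2) * ‖v‖ ^ k)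
    (hmoms : ∀ v : EuclideanSpace ℝ (Fin d),
      (1 / (n : ℝ)) * ∑ i, ⟪xs i - μs, v⟫_ℝ ^ k ≤ (k : ℝ) ^ ((k : ℝ) / 2) * ‖v‖ ^ k) :
    ‖μ - μs‖ ^ k ≤
      2 ^ (2 * k - 1) * ε ^ (k - 1) * (k : ℝ) ^ ((k : ℝ) / 2) / (1 - 2 * ε) ^ k := by
  classical
  have hn0 : n ≠ 0 := by omega
  have hnpos : (0 : ℝ) < n := by positivity
  have hδ : 0 < 1 - 2 * ε := by linarith
  have hk0 : k ≠ 0 := by omega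
  have hkeven : Even k := by
    obtain ⟨m, rfl⟩ := hkpow
    refine even_two.pow_of_ne_zero ?_
    rintro rfl
    simp at hk
  set v := μ - μs with hv
  set K : ℝ := (k : ℝ) ^ ((k : ℝ) / 2)
  set G : Finset (Fin n) := {i | w i = 1 ∧ ws i = 1} with hGdef
  have hcard : (1 - 2 * ε) * n ≤ (#G : ℝ) := by
    have hpt : ∀ i, w i + ws i ≤ 1 + if w i = 1 ∧ ws i = 1 then 1 else 0 := by
      intro i
      have h01 : ∀ t : ℝ, t ^ 2 = t → t = 0 ∨ t = 1 := fun t ht => by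
        have : t * (t - 1) = 0 := by linear_combination ht
        simpa [sub_eq_zero] using this
      rcases h01 _ (hw i) with h | h <;> rcases h01 _ (hws i) with h' | h' <;>
        norm_num [h, h']
    have hsum := Finset.sum_le_sum fun i (_ : i ∈ Finset.univ) => hpt i
    rw [Finset.sum_add_distrib, Finset.sum_add_distrib, Finset.sum_boole, ← hGdef] at hsum
    rw [one_div_mul_eq_div, le_div_iff₀ hnpos] at hwsum hwssum
    simp only [Finset.sum_const, Finset.card_univ, Fintype.card_fin, nsmul_eq_mul, mul_one] at hsum
    linarith
  have hcompl : (#Gᶜ : ℝ) ≤ 2 * ε * n := by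
    have h : (#G : ℝ) + #Gᶜ = n := by
      exact_mod_cast (Finset.card_add_card_compl G).trans (Fintype.card_fin n)
    linarith
  have hagree : ∀ i ∈ G, ⟪xs i - μs, v⟫_ℝ - ⟪x i - μ, v⟫_ℝ = ‖v‖ ^ 2 := by
    intro i hi
    obtain ⟨h1, h2⟩ := (Finset.mem_filter.mp hi).2
    have hx : x i = xs i := by
      have e1 := hwz i
      have e2 := hwsz i
      rw [h1, one_smul, sub_eq_zero] at e1
      rw [h2, one_smul, sub_eq_zero] at e2
      exact e1.symm.trans e2
    rw [← inner_sub_left, hx, sub_sub_sub_cancel_left, ← hv, real_inner_self_eq_norm_sq]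
  have hkey := card_mul_pow_le_of_agree G (fun i => ⟪x i - μ, v⟫_ℝ) (fun i => ⟪xs i - μs, v⟫_ℝ)
    (‖v‖ ^ 2) hkeven hk0 hagree (by
      rw [hμ, hμs, sum_inner_sub_mean_eq_zero hn0, sum_inner_sub_mean_eq_zero hn0])
  have hm := hmom v
  have hms := hmoms v
  rw [one_div_mul_eq_div, div_le_iff₀ hnpos] at hm hms
  have hmain : (((1 - 2 * ε) * n) * ‖v‖ ^ 2) ^ k ≤
      (2 * ε * n) ^ (k - 1) * (2 ^ (k - 1) * (K * ‖v‖ ^ k * n + K * ‖v‖ ^ k * n)) := by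
    refine (le_trans ?_ hkey).trans ?_
    · gcongr
    · have : 0 ≤ ∑ i, ⟪x i - μ, v⟫_ℝ ^ k + ∑ i, ⟪xs i - μs, v⟫_ℝ ^ k :=
        add_nonneg (Finset.sum_nonneg fun i _ => hkeven.pow_nonneg _)
          (Finset.sum_nonneg fun i _ => hkeven.pow_nonneg _)
      gcongr
  rw [le_div_iff₀ (by positivity)]
  rcases (norm_nonneg v).eq_or_lt with h0 | h0
  · rw [← h0, zero_pow hk0, zero_mul]
    positivity
  · have hscale : 0 < (n : ℝ) ^ k * ‖v‖ ^ k := by positivity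
    refine le_of_mul_le_mul_right ?_ hscale
    refine (Eq.le ?_).trans (hmain.trans_eq ?_)
    · rw [mul_pow, mul_pow]
      ring
    · obtain ⟨m, rfl⟩ := Nat.exists_eq_succ_of_ne_zero hk0
      rw [show 2 * m.succ - 1 = m + m + 1 by omega, Nat.succ_sub_one, mul_pow, mul_pow, pow_succ (n : ℝ)]
      ring
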